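/- Hölder continuity of the collision operator: let M, M' > 0 and N ≥ 0, and let V_M be a set of nonnegative functions in L¹_{N+2}(ℝ^d) whose L¹_{N+2}-norms are bounded above by M and whose L¹-norms are bounded below by M'. Then there exists a constant C_{M,M',N} > 0 such that for all g, h ∈ V_M, ‖Q[g] − Q[h]‖_{L¹_N} ≤ C_{M,M',N} · ‖g − h‖_{L¹_N}^{1/2}. -/

import Mathlib

noncomputable section
open MeasureTheory Filter Set Real

abbrev Sp (d : ℕ) : Type := EuclideanSpace ℝ (Fin d)

/-- Dispersion relation ω_k = √(λ1 + λ2 |k|²). -/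
def omg (l1 l2 : ℝ) {d : ℕ} (k : Sp d) : ℝ := Real.sqrt (l1 + l2 * ‖k‖ ^ 2)

/-- Zeroth moment 𝔐₀[f] = ∫ f. -/
def M0 {d : ℕ} (f : Sp d → ℝ) : ℝ := ∫ k, f k

/-- Resonance broadening Γ_{k,k1,k2}[f]. -/
def Gam {d : ℕ} (f : Sp d → ℝ) (k k1 k2 : Sp d) : ℝ :=
  (‖k‖ ^ 2 + ‖k1‖ ^ 2 + ‖k2‖ ^ 2) * M0 f

/-- Lorentzian L_f(ζ; k,k1,k2) = Γ/(ζ² + Γ²). -/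
def Lor {d : ℕ} (f : Sp d → ℝ) (z : ℝ) (k k1 k2 : Sp d) : ℝ :=
  Gam f k k1 k2 / (z ^ 2 + Gam f k k1 k2 ^ 2)

/-- Collision kernel |V_{k,k1,k2}|² = |k||k1||k2|. -/
def Vsq {d : ℕ} (k k1 k2 : Sp d) : ℝ := ‖k‖ * ‖k1‖ * ‖k2‖

/-- Collision operator Q[f] after eliminating the Dirac delta enforcing k = k1 + k2. -/
def Qop (l1 l2 : ℝ) {d : ℕ} (f : Sp d → ℝ) (k : Sp d) : ℝ :=
  (∫ k1, Vsq k k1 (k - k1) *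
      Lor f (omg l1 l2 k - omg l1 l2 k1 - omg l1 l2 (k - k1)) k k1 (k - k1) *
      (f k1 * f (k - k1) - f k * f k1 - f k * f (k - k1)))
  - 2 * ∫ k2, Vsq (k + k2) k k2 *
      Lor f (omg l1 l2 (k + k2) - omg l1 l2 k - omg l1 l2 k2) (k + k2) k k2 *
      (f k * f k2 - f k * f (k + k2) - f (k + k2) * f k2)

/-- Weighted L¹ norm ‖g‖_{L¹_N} = ∫ |g| ω^N. -/
def wnorm (l1 l2 N : ℝ) {d : ℕ} (g : Sp d → ℝ) : ℝ := ∫ k, |g k| * omg l1 l2 k ^ N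

/-- N-th moment 𝔐_N[g] = ∫ ω^N g. -/
def Mom (l1 l2 N : ℝ) {d : ℕ} (g : Sp d → ℝ) : ℝ := ∫ k, omg l1 l2 k ^ N * g k


lemma kern_bound (V s n z m M' : ℝ) (hM' : 0 < M') (hm : M' ≤ m) (hV : 0 ≤ V) (hn : 0 ≤ n)
    (hs : 0 ≤ s) (h : V ≤ n * s) :
    0 ≤ V * (s * m / (z ^ 2 + (s * m) ^ 2)) ∧
    V * (s * m / (z ^ 2 + (s * m) ^ 2)) ≤ (1 / M' + 1 / M' ^ 2) * n := by
  have hm0 : 0 < m := by linarith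
  refine ⟨by positivity, ?_⟩
  rcases hs.eq_or_lt with h0 | hs0
  · rw [← h0]; simp; positivity
  have h1 : s * m / (z ^ 2 + (s * m) ^ 2) ≤ 1 / (s * M') := by
    rw [div_le_div_iff₀ (by positivity) (by positivity)]
    have : s * m * (s * M') ≤ s * m * (s * m) := by gcongr
    nlinarith [sq_nonneg z]
  calc _ ≤ (n * s) * (1 / (s * M')) := by gcongr
    _ = 1 / M' * n := by field_simp
    _ ≤ _ := by
      have : 0 ≤ 1 / M' ^ 2 := by positivity
      nlinarith

lemma kern_diff (V s n z m m' M' : ℝ) (hM' : 0 < M') (hm : M' ≤ m) (hm' : M' ≤ m')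
    (hV : 0 ≤ V) (hn : 0 ≤ n) (hs : 0 ≤ s) (h : V ≤ n * s) :
    |V * (s * m / (z ^ 2 + (s * m) ^ 2)) - V * (s * m' / (z ^ 2 + (s * m') ^ 2))|
      ≤ (1 / M' + 1 / M' ^ 2) * |m - m'| * n := by
  have hm0 : 0 < m := by linarith
  have hm0' : 0 < m' := by linarith
  rcases hs.eq_or_lt with h0 | hs0
  · rw [← h0]; simp; positivity
  have h1 : |s * m / (z ^ 2 + (s * m) ^ 2) - s * m' / (z ^ 2 + (s * m') ^ 2)|
      ≤ |m - m'| / (s * (m * m')) := by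
    have e : s * m / (z ^ 2 + (s * m) ^ 2) - s * m' / (z ^ 2 + (s * m') ^ 2)
        = (m - m') * (s * (z ^ 2 - s * m * (s * m')) /
          ((z ^ 2 + (s * m) ^ 2) * (z ^ 2 + (s * m') ^ 2))) := by
      field_simp; ring
    have e2 : |s * (z ^ 2 - s * m * (s * m')) /
          ((z ^ 2 + (s * m) ^ 2) * (z ^ 2 + (s * m') ^ 2))| ≤ 1 / (s * (m * m')) := by
      rw [abs_div, abs_of_pos (show 0 < (z ^ 2 + (s * m) ^ 2) * (z ^ 2 + (s * m') ^ 2) by positivity),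
        div_le_div_iff₀ (by positivity) (by positivity), abs_mul, abs_of_pos hs0]
      have p : 0 < s * m * (s * m') := by positivity
      have : |z ^ 2 - s * m * (s * m')| ≤ z ^ 2 + s * m * (s * m') := by
        rw [abs_le]; constructor <;> nlinarith [sq_nonneg z]
      calc _ = |z ^ 2 - s * m * (s * m')| * (s * m * (s * m')) := by ring
        _ ≤ (z ^ 2 + s * m * (s * m')) * (s * m * (s * m')) := by gcongr
        _ ≤ _ := by
          have : 0 ≤ z ^ 2 * ((s * m - s * m') ^ 2 + s * m * (s * m') + z ^ 2) := by positivity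
          nlinarith
    rw [e, abs_mul]
    calc _ ≤ |m - m'| * (1 / (s * (m * m'))) := by gcongr
      _ = _ := by ring
  rw [← mul_sub, abs_mul, abs_of_nonneg hV]
  calc _ ≤ (n * s) * (|m - m'| / (s * (M' * M'))) := by
        refine mul_le_mul h (h1.trans ?_) (abs_nonneg _) (by positivity)
        gcongr
    _ = 1 / M' ^ 2 * |m - m'| * n := by field_simp
    _ ≤ _ := by
      have : 0 ≤ 1 / M' * |m - m'| * n := by positivity
      nlinarith

lemma omg_pos (l1 l2 : ℝ) (hl1 : 0 < l1) (hl2 : 0 < l2) {d : ℕ} (k : Sp d) :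
    0 < omg l1 l2 k := by
  unfold omg; positivity

lemma omg_meas (l1 l2 : ℝ) {d : ℕ} : Measurable (omg l1 l2 : Sp d → ℝ) := by
  unfold omg; fun_prop

lemma omg_tri (l1 l2 : ℝ) (hl1 : 0 < l1) (hl2 : 0 < l2) {d : ℕ} (k x y : Sp d)
    (h : ‖k‖ ≤ ‖x‖ + ‖y‖) : omg l1 l2 k ≤ omg l1 l2 x + omg l1 l2 y := by
  have px := omg_pos l1 l2 hl1 hl2 x
  have py := omg_pos l1 l2 hl1 hl2 y
  have sx : omg l1 l2 x ^ 2 = l1 + l2 * ‖x‖ ^ 2 := Real.sq_sqrt (by positivity)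
  have sy : omg l1 l2 y ^ 2 = l1 + l2 * ‖y‖ ^ 2 := Real.sq_sqrt (by positivity)
  have hxy : l2 * (‖x‖ * ‖y‖) ≤ omg l1 l2 x * omg l1 l2 y := by
    refine (sq_le_sq₀ (by positivity) (by positivity)).1 ?_
    rw [mul_pow (omg l1 l2 x), sx, sy]
    have : 0 ≤ l1 * (l1 + l2 * ‖x‖ ^ 2 + l2 * ‖y‖ ^ 2) := by positivity
    nlinarith
  have hk : ‖k‖ ^ 2 ≤ (‖x‖ + ‖y‖) ^ 2 := by gcongr
  unfold omg at *
  apply Real.sqrt_le_iff.2 ⟨by positivity, ?_⟩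
  have := mul_le_mul_of_nonneg_left hk hl2.le
  nlinarith

lemma omg_facts (l1 l2 N : ℝ) (hl1 : 0 < l1) (hl2 : 0 < l2) (hN : 0 ≤ N) (d : ℕ) :
    ∃ c > (0:ℝ), (∀ k : Sp d, 1 ≤ c * omg l1 l2 k ^ N) ∧
      (∀ k : Sp d, omg l1 l2 k ^ N ≤ c * omg l1 l2 k ^ (N + 2)) ∧
      (∀ k : Sp d, ‖k‖ * omg l1 l2 k ^ N ≤ c * omg l1 l2 k ^ (N + 2)) ∧
      (∀ k x y : Sp d, ‖k‖ ≤ ‖x‖ + ‖y‖ →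
        omg l1 l2 k ^ N ≤ c * (omg l1 l2 x ^ N * omg l1 l2 y ^ N)) := by
  have hs : 0 < √l1 := by positivity
  have hlow : ∀ k : Sp d, √l1 ≤ omg l1 l2 k := fun k => by
    unfold omg; apply Real.sqrt_le_sqrt; have : 0 ≤ l2 * ‖k‖ ^ 2 := by positivity
    linarith
  have hsq : ∀ k : Sp d, omg l1 l2 k ^ (2:ℝ) = l1 + l2 * ‖k‖ ^ 2 := fun k => by
    rw [Real.rpow_two]; exact Real.sq_sqrt (by positivity)
  have hp := fun k : Sp d => omg_pos l1 l2 hl1 hl2 k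
  refine ⟨1 / √l1 ^ N + 1 / l1 + 1 / l2 + (2 / √l1) ^ N, by positivity, ?_, ?_, ?_, ?_⟩
  · intro k
    have h1 : 1 ≤ 1 / √l1 ^ N * omg l1 l2 k ^ N := by
      rw [one_div, inv_mul_eq_div, le_div_iff₀ (by positivity), one_mul]
      exact Real.rpow_le_rpow hs.le (hlow k) hN
    refine h1.trans ?_
    gcongr
    · have := hp k; positivity
    · have : 0 ≤ 1 / l1 + 1 / l2 + (2 / √l1) ^ N := by positivity
      linarith
  · intro k
    have hpk := hp k
    rw [Real.rpow_add hpk, hsq]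
    have : 1 ≤ (1 / √l1 ^ N + 1 / l1 + 1 / l2 + (2 / √l1) ^ N) * (l1 + l2 * ‖k‖ ^ 2) := by
      calc 1 = (1 / l1) * l1 := by field_simp
        _ ≤ _ := by
          gcongr
          · have : 0 ≤ 1 / √l1 ^ N + 1 / l2 + (2 / √l1) ^ N := by positivity
            linarith
          · have : 0 ≤ l2 * ‖k‖ ^ 2 := by positivity
            linarith
    calc omg l1 l2 k ^ N = omg l1 l2 k ^ N * 1 := by ring
      _ ≤ omg l1 l2 k ^ N * _ := mul_le_mul_of_nonneg_left this (by positivity)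
      _ = _ := by ring
  · intro k
    have hpk := hp k
    rw [Real.rpow_add hpk, hsq]
    have : ‖k‖ ≤ (1 / √l1 ^ N + 1 / l1 + 1 / l2 + (2 / √l1) ^ N) * (l1 + l2 * ‖k‖ ^ 2) := by
      calc ‖k‖ ≤ 1 + ‖k‖ ^ 2 := by nlinarith [sq_nonneg (‖k‖ - 1)]
        _ ≤ 1 + ‖k‖ ^ 2 + (1 / l1 * (l2 * ‖k‖ ^ 2) + 1 / l2 * l1) := by
          have : 0 ≤ 1 / l1 * (l2 * ‖k‖ ^ 2) + 1 / l2 * l1 := by positivity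
          linarith
        _ = (1 / l1 + 1 / l2) * (l1 + l2 * ‖k‖ ^ 2) := by field_simp; ring
        _ ≤ _ := by
          refine mul_le_mul_of_nonneg_right ?_ (by positivity)
          have : 0 ≤ 1 / √l1 ^ N := by positivity
          have : 0 ≤ (2 / √l1) ^ N := by positivity
          linarith
    calc _ ≤ _ * omg l1 l2 k ^ N := mul_le_mul_of_nonneg_right this (by positivity)
      _ = _ := by ring
  · intro k x y h
    have hx := hp x
    have hy := hp y
    have h1 : omg l1 l2 k ≤ 2 / √l1 * (omg l1 l2 x * omg l1 l2 y) := by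
      refine (omg_tri l1 l2 hl1 hl2 k x y h).trans ?_
      rw [div_mul_eq_mul_div, le_div_iff₀ hs]
      nlinarith [mul_le_mul_of_nonneg_left (hlow x) hy.le, mul_le_mul_of_nonneg_left (hlow y) hx.le]
    calc _ ≤ (2 / √l1 * (omg l1 l2 x * omg l1 l2 y)) ^ N := Real.rpow_le_rpow (hp k).le h1 hN
      _ = (2 / √l1) ^ N * (omg l1 l2 x ^ N * omg l1 l2 y ^ N) := by
        rw [Real.mul_rpow (by positivity) (by positivity), Real.mul_rpow hx.le hy.le]
      _ ≤ _ := by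
        gcongr
        have : 0 ≤ 1 / √l1 ^ N + 1 / l1 + 1 / l2 := by positivity
        linarith

lemma pointwise_term (κ κ' gx gy hx hy W px py qx qy mx my δ E c : ℝ)
    (h0' : 0 ≤ κ') (hgx : 0 ≤ gx) (hgy : 0 ≤ gy) (hhx : 0 ≤ hx)
    (hW0 : 0 ≤ W) (hpx0 : 0 ≤ px) (hpy0 : 0 ≤ py)
    (hmy : 0 ≤ my) (hmx : 0 ≤ mx) (hδ : 0 ≤ δ) (hE : 0 ≤ E) (hc : 0 ≤ c)
    (hW : W ≤ c * (px * py)) (hpq : px ≤ c * qx)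
    (hmq : mx * px ≤ c * qx) (hmq' : my * py ≤ c * qy)
    (hd : |κ - κ'| ≤ E * δ * my) (hk1 : κ' ≤ E * mx) (hk2 : κ' ≤ E * my) :
    |κ * (gx * gy) - κ' * (hx * hy)| * W ≤
      E * c ^ 3 * δ * ((gx * qx) * (gy * qy)) + E * c ^ 2 * ((|gx - hx| * px) * (gy * qy))
      + E * c ^ 2 * ((hx * qx) * (|gy - hy| * py)) := by
  have e : κ * (gx * gy) - κ' * (hx * hy) =
    (κ - κ') * (gx * gy) + κ' * ((gx - hx) * gy) + κ' * (hx * (gy - hy)) := by ring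
  have b1 : |κ * (gx * gy) - κ' * (hx * hy)| ≤
     (E * δ * my) * (gx * gy) + (E * my) * (|gx - hx| * gy) + (E * mx) * (hx * |gy - hy|) := by
    rw [e]
    refine (abs_add_three _ _ _).trans ?_
    simp only [abs_mul, abs_of_nonneg h0', abs_of_nonneg hgx, abs_of_nonneg hgy,
      abs_of_nonneg hhx]
    gcongr
  calc _ ≤ ((E * δ * my) * (gx * gy) + (E * my) * (|gx - hx| * gy) + (E * mx) * (hx * |gy - hy|))
        * (c * (px * py)) := by gcongr
    _ = E * δ * c * (gx * gy) * (px * (my * py)) + E * c * (|gx - hx| * px * gy) * (my * py)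
        + E * c * (hx * (|gy - hy| * py)) * (mx * px) := by ring
    _ ≤ E * δ * c * (gx * gy) * ((c * qx) * (c * qy)) + E * c * (|gx - hx| * px * gy) * (c * qy)
        + E * c * (hx * (|gy - hy| * py)) * (c * qx) := by
      have : 0 ≤ c * qx := hpx0.trans hpq
      gcongr
    _ = _ := by ring

lemma prod_comp {d : ℕ} (T : Sp d × Sp d → Sp d × Sp d)
    (hT : MeasurePreserving T (volume.prod volume) (volume.prod volume))
    (a b : Sp d → ℝ) (ha : Integrable a) (hb : Integrable b) :
    Integrable (fun z => a (T z).1 * b (T z).2) (volume.prod volume) ∧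
    ∫ z, a (T z).1 * b (T z).2 ∂(volume.prod volume) = (∫ k, a k) * ∫ k, b k := by
  have hab : Integrable (fun z : Sp d × Sp d => a z.1 * b z.2) (volume.prod volume) :=
    ha.mul_prod hb
  refine ⟨hT.integrable_comp_of_integrable hab, ?_⟩
  rw [← integral_prod_mul a b]
  have h := integral_map (μ := volume.prod volume) hT.measurable.aemeasurable
    (f := fun z : Sp d × Sp d => a z.1 * b z.2) (by rw [hT.map_eq]; exact hab.aestronglyMeasurable)
  rw [hT.map_eq] at h
  exact h.symm

lemma pair_integrable {d : ℕ} (T : Sp d × Sp d → Sp d × Sp d)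
    (hT : MeasurePreserving T (volume.prod volume) (volume.prod volume))
    (κ : Sp d × Sp d → ℝ) (hκ : Measurable κ) (g : Sp d → ℝ) (E : ℝ) (hg0 : ∀ k, 0 ≤ g k)
    (hg : Integrable g) (hg1 : Integrable (fun k => g k * ‖k‖))
    (hk0 : ∀ z, 0 ≤ κ z) (hk : ∀ z, κ z ≤ E * ‖(T z).2‖) :
    Integrable (fun z => κ z * (g (T z).1 * g (T z).2)) (volume.prod volume) := by
  have h1 := (prod_comp T hT g g hg hg).1
  have h2 := ((prod_comp T hT g _ hg hg1).1).const_mul E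
  refine h2.mono' (hκ.aestronglyMeasurable.mul h1.aestronglyMeasurable) (Eventually.of_forall ?_)
  intro z
  have := mul_nonneg (hg0 (T z).1) (hg0 (T z).2)
  rw [Real.norm_of_nonneg (mul_nonneg (hk0 z) this)]
  calc _ ≤ (E * ‖(T z).2‖) * (g (T z).1 * g (T z).2) := by gcongr; exact hk z
    _ = _ := by ring

lemma pair_est {d : ℕ} (T : Sp d × Sp d → Sp d × Sp d)
    (hT : MeasurePreserving T (volume.prod volume) (volume.prod volume))
    (κ κ' : Sp d × Sp d → ℝ) (g h p q : Sp d → ℝ) (E c δ M A : ℝ)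
    (hE : 0 ≤ E) (hc : 0 ≤ c) (hδ : 0 ≤ δ) (hM : 0 ≤ M)
    (hg0 : ∀ k, 0 ≤ g k) (hh0 : ∀ k, 0 ≤ h k) (hp0 : ∀ k, 0 ≤ p k)
    (hq0 : ∀ k, 0 ≤ q k)
    (hg : Integrable (fun k => g k * q k)) (hh : Integrable (fun k => h k * q k))
    (hD : Integrable (fun k => |g k - h k| * p k))
    (hgM : ∫ k, g k * q k ≤ M) (hhM : ∫ k, h k * q k ≤ M)
    (hA : ∫ k, |g k - h k| * p k = A) (hδA : δ ≤ c * A)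
    (hpq : ∀ k, p k ≤ c * q k) (hmq : ∀ k, ‖k‖ * p k ≤ c * q k)
    (hW : ∀ z, p z.1 ≤ c * (p (T z).1 * p (T z).2))
    (hk0' : ∀ z, 0 ≤ κ' z)
    (hk1' : ∀ z, κ' z ≤ E * ‖(T z).1‖) (hk2' : ∀ z, κ' z ≤ E * ‖(T z).2‖)
    (hd : ∀ z, |κ z - κ' z| ≤ E * δ * ‖(T z).2‖) :
    ∃ G : Sp d × Sp d → ℝ, Integrable G (volume.prod volume) ∧
      ∫ z, G z ∂(volume.prod volume) ≤ (E * c ^ 4 * M ^ 2 + 2 * E * c ^ 2 * M) * A ∧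
      ∀ z, |κ z * (g (T z).1 * g (T z).2) - κ' z * (h (T z).1 * h (T z).2)| * p z.1 ≤ G z := by
  obtain ⟨i1, e1⟩ := prod_comp T hT _ _ hg hg
  obtain ⟨i2, e2⟩ := prod_comp T hT _ _ hD hg
  obtain ⟨i3, e3⟩ := prod_comp T hT _ _ hh hD
  have j1 := i1.const_mul (E * c ^ 3 * δ)
  have j2 := i2.const_mul (E * c ^ 2)
  have j3 := i3.const_mul (E * c ^ 2)
  refine ⟨_, (j1.add j2).add j3, ?_, fun z => ?_⟩
  · have hA0 : 0 ≤ A := by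
      rw [← hA]; exact integral_nonneg fun k => mul_nonneg (abs_nonneg _) (hp0 k)
    have g0 : 0 ≤ ∫ k, g k * q k := integral_nonneg fun k => mul_nonneg (hg0 k) (hq0 k)
    simp only [Pi.add_apply]
    rw [integral_add (by exact j1.add j2) j3, integral_add j1 j2, integral_const_mul,
      integral_const_mul, integral_const_mul, e1, e2, e3, hA]
    calc _ ≤ E * c ^ 3 * (c * A) * (M * M) + E * c ^ 2 * (A * M) + E * c ^ 2 * (M * A) := by
          gcongr
      _ = _ := by ring
  · simp only [Pi.add_apply]
    exact pointwise_term (κ z) (κ' z) _ _ _ _ _ _ _ _ _ ‖(T z).1‖ ‖(T z).2‖ δ E c (hk0' z)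
      (hg0 _) (hg0 _) (hh0 _) (hp0 _) (hp0 _) (hp0 _) (norm_nonneg _) (norm_nonneg _) hδ hE hc
      (hW z) (hpq _) (hmq _) (hmq _) (hd z) (hk1' z) (hk2' z)

/-- Bundled conclusion of the estimates for one quadratic term. -/
def Est {d : ℕ} (p : Sp d → ℝ) (F H : Sp d × Sp d → ℝ) (K : ℝ) : Prop :=
  Integrable F (volume.prod volume) ∧ Integrable H (volume.prod volume) ∧
  ∃ G : Sp d × Sp d → ℝ, Integrable G (volume.prod volume) ∧
    ∫ z, G z ∂(volume.prod volume) ≤ K ∧ ∀ z, |F z - H z| * p z.1 ≤ G z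

lemma Est.sub' {d : ℕ} {p : Sp d → ℝ} {F H F' H' : Sp d × Sp d → ℝ} {K K' : ℝ}
    (hp : ∀ k, 0 ≤ p k)
    (h : Est p F H K) (h' : Est p F' H' K') :
    Est p (fun z => F z - F' z) (fun z => H z - H' z) (K + K') := by
  obtain ⟨a, b, G, c, e, f⟩ := h
  obtain ⟨a', b', G', c', e', f'⟩ := h'
  refine ⟨a.sub a', b.sub b', fun z => G z + G' z, c.add c', ?_, fun z => ?_⟩
  · rw [integral_add c c']; linarith
  · calc _ ≤ (|F z - H z| + |F' z - H' z|) * p z.1 := by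
          refine mul_le_mul_of_nonneg_right ?_ (hp _)
          have := abs_sub (F z - H z) (F' z - H' z)
          rwa [show F z - F' z - (H z - H' z) = F z - H z - (F' z - H' z) by ring]
      _ ≤ _ := by linarith [f z, f' z, add_mul (|F z - H z|) (|F' z - H' z|) (p z.1)]

lemma Est.final {d : ℕ} {p : Sp d → ℝ} {F H F' H' : Sp d × Sp d → ℝ} {K K' : ℝ}
    (hp : ∀ k, 0 ≤ p k) (h : Est p F H K) (h' : Est p F' H' K') :
    ∫ k, |((∫ q, F (k, q)) - 2 * ∫ q, F' (k, q)) - ((∫ q, H (k, q)) - 2 * ∫ q, H' (k, q))| * p k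
      ≤ K + 2 * K' := by
  obtain ⟨a, b, G, c, e, f⟩ := h
  obtain ⟨a', b', G', c', e', f'⟩ := h'
  have key : ∀ (F H G : Sp d × Sp d → ℝ) (k : Sp d), (∀ z, |F z - H z| * p z.1 ≤ G z) →
      Integrable (fun q => F (k, q)) → Integrable (fun q => H (k, q)) →
      Integrable (fun q => G (k, q)) →
      |(∫ q, F (k, q)) - ∫ q, H (k, q)| * p k ≤ ∫ q, G (k, q) := by
    intro F H G k hb hF hH hG
    rw [← integral_sub hF hH]
    calc _ ≤ (∫ q, |F (k, q) - H (k, q)|) * p k :=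
          mul_le_mul_of_nonneg_right (abs_integral_le_integral_abs) (hp k)
      _ = ∫ q, |F (k, q) - H (k, q)| * p k := (integral_mul_const _ _).symm
      _ ≤ _ := integral_mono_of_nonneg
          (Eventually.of_forall fun q => mul_nonneg (abs_nonneg _) (hp k)) hG
          (Eventually.of_forall fun q => hb (k, q))
  have hI : Integrable (fun k => (∫ q, G (k, q)) + 2 * ∫ q, G' (k, q)) :=
    c.integral_prod_left.add (c'.integral_prod_left.const_mul 2)
  calc _ ≤ ∫ k, ((∫ q, G (k, q)) + 2 * ∫ q, G' (k, q)) := by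
        refine integral_mono_of_nonneg
          (Eventually.of_forall fun q => mul_nonneg (abs_nonneg _) (hp _)) hI ?_
        filter_upwards [a.prod_right_ae, b.prod_right_ae, c.prod_right_ae, a'.prod_right_ae,
          b'.prod_right_ae, c'.prod_right_ae] with k ka kb kc ka' kb' kc'
        have k1 := key F H G k f ka kb kc
        have k2 := key F' H' G' k f' ka' kb' kc'
        set u := (∫ q, F (k, q)) - ∫ q, H (k, q) with hu
        set v := (∫ q, F' (k, q)) - ∫ q, H' (k, q) with hv
        have : |((∫ q, F (k, q)) - 2 * ∫ q, F' (k, q)) - ((∫ q, H (k, q)) - 2 * ∫ q, H' (k, q))|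
            ≤ |u| + 2 * |v| := by
          have e := abs_sub u (2 * v)
          rw [abs_mul, abs_two] at e
          refine le_trans (le_of_eq ?_) e
          congr 1
          rw [hu, hv]; ring
        have := mul_le_mul_of_nonneg_right this (hp k)
        linarith [add_mul (|u|) (2 * |v|) (p k), mul_assoc 2 (|v|) (p k)]
    _ = (∫ z, G z ∂(volume.prod volume)) + 2 * ∫ z, G' z ∂(volume.prod volume) := by
        rw [integral_add c.integral_prod_left (c'.integral_prod_left.const_mul 2),
          integral_const_mul, integral_prod _ c, integral_prod _ c']
    _ ≤ _ := by linarith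

lemma Vsq_le {d : ℕ} (a b e x : Sp d) (h : x = a ∨ x = b ∨ x = e) :
    Vsq a b e ≤ ‖x‖ * (‖a‖ ^ 2 + ‖b‖ ^ 2 + ‖e‖ ^ 2) := by
  unfold Vsq
  have ha := norm_nonneg a
  have hb := norm_nonneg b
  have he := norm_nonneg e
  have h1 : ‖b‖ * ‖e‖ ≤ ‖a‖ ^ 2 + ‖b‖ ^ 2 + ‖e‖ ^ 2 := by nlinarith [sq_nonneg (‖b‖ - ‖e‖)]
  have h2 : ‖a‖ * ‖e‖ ≤ ‖a‖ ^ 2 + ‖b‖ ^ 2 + ‖e‖ ^ 2 := by nlinarith [sq_nonneg (‖a‖ - ‖e‖)]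
  have h3 : ‖a‖ * ‖b‖ ≤ ‖a‖ ^ 2 + ‖b‖ ^ 2 + ‖e‖ ^ 2 := by nlinarith [sq_nonneg (‖a‖ - ‖b‖)]
  rcases h with rfl | rfl | rfl
  · linarith [mul_le_mul_of_nonneg_left h1 ha]
  · linarith [mul_le_mul_of_nonneg_left h2 hb]
  · linarith [mul_le_mul_of_nonneg_left h3 he]

lemma ker_meas {d : ℕ} (f : Sp d → ℝ) (a b e : Sp d × Sp d → Sp d) (ζ : Sp d × Sp d → ℝ)
    (ha : Measurable a) (hb : Measurable b) (he : Measurable e) (hζ : Measurable ζ) :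
    Measurable (fun z => Vsq (a z) (b z) (e z) * Lor f (ζ z) (a z) (b z) (e z)) := by
  unfold Vsq Lor Gam
  fun_prop

lemma term_est {d : ℕ} (l1 l2 N M M' c A : ℝ) (g h : Sp d → ℝ)
    (hl1 : 0 < l1) (hl2 : 0 < l2) (hM : 0 < M) (hM' : 0 < M') (hc : 0 < c)
    (f1 : ∀ k : Sp d, 1 ≤ c * omg l1 l2 k ^ N)
    (f2 : ∀ k : Sp d, omg l1 l2 k ^ N ≤ c * omg l1 l2 k ^ (N + 2))
    (f3 : ∀ k : Sp d, ‖k‖ * omg l1 l2 k ^ N ≤ c * omg l1 l2 k ^ (N + 2))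
    (f4 : ∀ k x y : Sp d, ‖k‖ ≤ ‖x‖ + ‖y‖ →
        omg l1 l2 k ^ N ≤ c * (omg l1 l2 x ^ N * omg l1 l2 y ^ N))
    (hg0 : ∀ k, 0 ≤ g k) (hh0 : ∀ k, 0 ≤ h k)
    (ig : Integrable g) (ih : Integrable h)
    (ig1 : Integrable (fun k => g k * ‖k‖)) (ih1 : Integrable (fun k => h k * ‖k‖))
    (hg : Integrable (fun k => g k * omg l1 l2 k ^ (N + 2)))
    (hh : Integrable (fun k => h k * omg l1 l2 k ^ (N + 2)))
    (hD : Integrable (fun k => |g k - h k| * omg l1 l2 k ^ N))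
    (hgM : ∫ k, g k * omg l1 l2 k ^ (N + 2) ≤ M) (hhM : ∫ k, h k * omg l1 l2 k ^ (N + 2) ≤ M)
    (hA : ∫ k, |g k - h k| * omg l1 l2 k ^ N = A) (hδA : |M0 g - M0 h| ≤ c * A)
    (mg : M' ≤ M0 g) (mh : M' ≤ M0 h)
    (a b e : Sp d × Sp d → Sp d) (ζ : Sp d × Sp d → ℝ)
    (ha : Measurable a) (hb : Measurable b) (he : Measurable e) (hζ : Measurable ζ)
    (T : Sp d × Sp d → Sp d × Sp d)
    (hT : MeasurePreserving T (volume.prod volume) (volume.prod volume))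
    (htri : ∀ z, ‖z.1‖ ≤ ‖(T z).1‖ + ‖(T z).2‖)
    (hx : ∀ z, (T z).1 = a z ∨ (T z).1 = b z ∨ (T z).1 = e z)
    (hy : ∀ z, (T z).2 = a z ∨ (T z).2 = b z ∨ (T z).2 = e z) :
    Est (fun k => omg l1 l2 k ^ N)
      (fun z => Vsq (a z) (b z) (e z) * Lor g (ζ z) (a z) (b z) (e z) * (g (T z).1 * g (T z).2))
      (fun z => Vsq (a z) (b z) (e z) * Lor h (ζ z) (a z) (b z) (e z) * (h (T z).1 * h (T z).2))
      (((1 / M' + 1 / M' ^ 2) * c ^ 4 * M ^ 2 + 2 * (1 / M' + 1 / M' ^ 2) * c ^ 2 * M) * A) := by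
  have hp : ∀ k : Sp d, 0 < omg l1 l2 k := fun k => omg_pos l1 l2 hl1 hl2 k
  have V0 : ∀ z, 0 ≤ Vsq (a z) (b z) (e z) := fun z => by unfold Vsq; positivity
  have B : ∀ (f : Sp d → ℝ), M' ≤ M0 f → ∀ z x, (x = a z ∨ x = b z ∨ x = e z) →
      0 ≤ Vsq (a z) (b z) (e z) * Lor f (ζ z) (a z) (b z) (e z) ∧
      Vsq (a z) (b z) (e z) * Lor f (ζ z) (a z) (b z) (e z) ≤ (1 / M' + 1 / M' ^ 2) * ‖x‖ :=
    fun f mf z x hx => kern_bound _ _ _ _ _ _ hM' mf (V0 z) (norm_nonneg x) (by positivity)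
      (Vsq_le _ _ _ _ hx)
  have mκ := fun f => ker_meas f a b e ζ ha hb he hζ
  refine ⟨pair_integrable T hT _ (mκ g) g _ hg0 ig ig1 (fun z => (B g mg z _ (hx z)).1)
      (fun z => (B g mg z _ (hy z)).2),
    pair_integrable T hT _ (mκ h) h _ hh0 ih ih1 (fun z => (B h mh z _ (hx z)).1)
      (fun z => (B h mh z _ (hy z)).2), ?_⟩
  exact pair_est T hT _ _ g h _ (fun k => omg l1 l2 k ^ (N + 2)) _ c |M0 g - M0 h| M A
    (by positivity) hc.le (abs_nonneg _) hM.le hg0 hh0 (fun k => by have := hp k; positivity)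
    (fun k => by have := hp k; positivity) hg hh hD hgM hhM hA hδA f2 f3
    (fun z => f4 _ _ _ (htri z)) (fun z => (B h mh z _ (hx z)).1)
    (fun z => (B h mh z _ (hx z)).2) (fun z => (B h mh z _ (hy z)).2)
    (fun z => kern_diff _ _ _ _ _ _ _ hM' mg mh (V0 z) (norm_nonneg _) (by positivity)
      (Vsq_le _ _ _ _ (hy z)))

/-- Hölder continuity of the collision operator: for M, M' > 0 and N ≥ 0,
there is C_{M,M',N} > 0 such that for all nonnegative g, h with L¹_{N+2} norms ≤ M and
L¹ norms ≥ M', ‖Q[g] − Q[h]‖_{L¹_N} ≤ C·‖g − h‖_{L¹_N}^{1/2}. -/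
theorem collision_holder_continuity {d : ℕ} (hd : 2 ≤ d) (l1 l2 M M' N : ℝ)
    (hl1 : 0 < l1) (hl2 : 0 < l2) (hM : 0 < M) (hM' : 0 < M') (hN : 0 ≤ N) :
    ∃ C > (0 : ℝ), ∀ g h : Sp d → ℝ,
      (∀ k, 0 ≤ g k) → (∀ k, 0 ≤ h k) →
      Integrable (fun k => |g k| * omg l1 l2 k ^ (N + 2)) →
      Integrable (fun k => |h k| * omg l1 l2 k ^ (N + 2)) →
      wnorm l1 l2 (N + 2) g ≤ M → wnorm l1 l2 (N + 2) h ≤ M →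
      M' ≤ ∫ k, |g k| → M' ≤ ∫ k, |h k| →
      wnorm l1 l2 N (fun k => Qop l1 l2 g k - Qop l1 l2 h k) ≤
        C * wnorm l1 l2 N (fun k => g k - h k) ^ ((1 : ℝ) / 2) := by
  obtain ⟨c, hc, f1, f2, f3, f4⟩ := omg_facts l1 l2 N hl1 hl2 hN d
  set K := (1 / M' + 1 / M' ^ 2) * c ^ 4 * M ^ 2 + 2 * (1 / M' + 1 / M' ^ 2) * c ^ 2 * M with hK
  have hK0 : 0 < K := by positivity
  refine ⟨9 * K * (c * (2 * M)) ^ ((1 : ℝ) / 2), by positivity, ?_⟩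
  intro g h hg0 hh0 hg hh hgM hhM mg mh
  have hp : ∀ k : Sp d, 0 < omg l1 l2 k := fun k => omg_pos l1 l2 hl1 hl2 k
  have hom : Measurable (omg l1 l2 : Sp d → ℝ) := omg_meas l1 l2
  have P0 : ∀ (r : ℝ) (k : Sp d), 0 ≤ omg l1 l2 k ^ r := fun r k => (Real.rpow_pos_of_pos (hp k) r).le
  have hcq : ∀ k : Sp d, 1 ≤ c ^ 2 * omg l1 l2 k ^ (N + 2) := fun k => by
    nlinarith [f1 k, mul_le_mul_of_nonneg_left (f2 k) hc.le]
  have hcn : ∀ k : Sp d, ‖k‖ ≤ c ^ 2 * omg l1 l2 k ^ (N + 2) := fun k => by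
    nlinarith [mul_le_mul_of_nonneg_left (f1 k) (norm_nonneg k),
      mul_le_mul_of_nonneg_left (f3 k) hc.le]
  have facts : ∀ f : Sp d → ℝ, (∀ k, 0 ≤ f k) →
      Integrable (fun k => |f k| * omg l1 l2 k ^ (N + 2)) →
      Integrable (fun k => f k * omg l1 l2 k ^ (N + 2)) ∧ Integrable f ∧
      Integrable (fun k => f k * ‖k‖) ∧ Integrable (fun k => f k * omg l1 l2 k ^ N) := by
    intro f f0 hf
    simp only [abs_of_nonneg (f0 _)] at hf
    have hm : AEStronglyMeasurable f := by
      have : f = fun k => (f k * omg l1 l2 k ^ (N + 2)) * (omg l1 l2 k ^ (N + 2))⁻¹ := by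
        funext k
        have := Real.rpow_pos_of_pos (hp k) (N + 2)
        field_simp
      rw [this]
      refine hf.aestronglyMeasurable.mul (Measurable.aestronglyMeasurable ?_)
      fun_prop
    refine ⟨hf, ?_, ?_, ?_⟩
    · refine (hf.const_mul (c ^ 2)).mono' hm (Eventually.of_forall fun k => ?_)
      rw [Real.norm_of_nonneg (f0 k)]
      nlinarith [mul_le_mul_of_nonneg_left (hcq k) (f0 k)]
    · refine (hf.const_mul (c ^ 2)).mono' (hm.mul (by fun_prop)) (Eventually.of_forall fun k => ?_)
      rw [Real.norm_of_nonneg (mul_nonneg (f0 k) (norm_nonneg k))]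
      nlinarith [mul_le_mul_of_nonneg_left (hcn k) (f0 k)]
    · refine (hf.const_mul c).mono' (hm.mul (Measurable.aestronglyMeasurable (by fun_prop)))
        (Eventually.of_forall fun k => ?_)
      rw [Real.norm_of_nonneg (mul_nonneg (f0 k) (P0 N k))]
      nlinarith [mul_le_mul_of_nonneg_left (f2 k) (f0 k)]
  obtain ⟨hgq, ig, ig1, igp⟩ := facts g hg0 hg
  obtain ⟨hhq, ih, ih1, ihp⟩ := facts h hh0 hh
  have hD : Integrable (fun k => |g k - h k| * omg l1 l2 k ^ N) := by
    refine (igp.sub ihp).abs.congr (Eventually.of_forall fun k => ?_)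
    simp only [Pi.sub_apply]
    rw [← sub_mul, abs_mul, abs_of_nonneg (P0 N k)]
  unfold wnorm at hgM hhM
  simp only [abs_of_nonneg (hg0 _)] at hgM mg
  simp only [abs_of_nonneg (hh0 _)] at hhM mh
  set A := wnorm l1 l2 N (fun k => g k - h k) with hA
  have hA0 : 0 ≤ A := integral_nonneg fun k => mul_nonneg (abs_nonneg _) (P0 N k)
  have hδA : |M0 g - M0 h| ≤ c * A := by
    unfold M0
    rw [← integral_sub ig ih, hA, wnorm, ← integral_const_mul]
    refine (abs_integral_le_integral_abs).trans ?_
    refine integral_mono (ig.sub ih).abs (hD.const_mul c) fun k => ?_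
    nlinarith [mul_le_mul_of_nonneg_left (f1 k) (abs_nonneg (g k - h k))]
  have hAM : A ≤ c * (2 * M) := by
    calc A ≤ ∫ k, c * (g k * omg l1 l2 k ^ (N + 2) + h k * omg l1 l2 k ^ (N + 2)) := by
          refine integral_mono hD ((hgq.add hhq).const_mul c) fun k => ?_
          have : |g k - h k| ≤ g k + h k := by
            rw [abs_le]; constructor <;> linarith [hg0 k, hh0 k]
          calc |g k - h k| * omg l1 l2 k ^ N ≤ (g k + h k) * (c * omg l1 l2 k ^ (N + 2)) :=
                mul_le_mul this (f2 k) (P0 N k) (add_nonneg (hg0 k) (hh0 k))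
            _ = _ := by ring
      _ ≤ _ := by
          rw [integral_const_mul, integral_add hgq hhq]
          gcongr; linarith
  have TE := term_est l1 l2 N M M' c A g h hl1 hl2 hM hM' hc f1 f2 f3 f4 hg0 hh0 ig ih ig1 ih1
    hgq hhq hD hgM hhM rfl hδA mg mh
  rw [← hK] at TE
  have t1 := TE (fun z => z.1) (fun z => z.2) (fun z => z.1 - z.2)
    (fun z => omg l1 l2 z.1 - omg l1 l2 z.2 - omg l1 l2 (z.1 - z.2))
    (by fun_prop) (by fun_prop) (by fun_prop) (by fun_prop)
  have t2 := TE (fun z => z.1 + z.2) (fun z => z.1) (fun z => z.2)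
    (fun z => omg l1 l2 (z.1 + z.2) - omg l1 l2 z.1 - omg l1 l2 z.2)
    (by fun_prop) (by fun_prop) (by fun_prop) (by fun_prop)
  have mid : MeasurePreserving (fun z : Sp d × Sp d => z) (volume.prod volume)
    (volume.prod volume) := MeasurePreserving.id _
  have msub : MeasurePreserving (fun z : Sp d × Sp d => (z.1, z.1 - z.2)) (volume.prod volume)
    (volume.prod volume) :=
    MeasurePreserving.skew_product (g := fun x y => x - y) (MeasurePreserving.id volume)
      (measurable_fst.sub measurable_snd)
      (Eventually.of_forall fun x => (Measure.measurePreserving_sub_left volume x).map_eq)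
  have a1 := t1 (fun z => (z.2, z.1 - z.2)) (measurePreserving_prod_sub_swap volume volume)
    (fun z => by simpa using norm_add_le z.2 (z.1 - z.2)) (fun z => by simp) (fun z => by simp)
  have a2 := t1 (fun z => z) mid (fun z => by simp) (fun z => by simp) (fun z => by simp)
  have a3 := t1 (fun z => (z.1, z.1 - z.2)) msub (fun z => by simp) (fun z => by simp)
    (fun z => by simp)
  have b1 := t2 (fun z => z) mid (fun z => by simp) (fun z => by simp) (fun z => by simp)
  have b2 := t2 (fun z => (z.1, z.1 + z.2)) (measurePreserving_prod_add volume volume)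
    (fun z => by simp) (fun z => by simp) (fun z => by simp)
  have b3 := t2 (fun z => (z.1 + z.2, z.2)) (measurePreserving_add_prod volume volume)
    (fun z => by simpa using norm_sub_le (z.1 + z.2) z.2) (fun z => by simp) (fun z => by simp)
  have fin := Est.final (P0 N) (Est.sub' (P0 N) (Est.sub' (P0 N) a1 a2) a3)
    (Est.sub' (P0 N) (Est.sub' (P0 N) b1 b2) b3)
  simp only [mul_sub] at fin
  have fin' : wnorm l1 l2 N (fun k => Qop l1 l2 g k - Qop l1 l2 h k) ≤ 9 * K * A := by
    refine le_trans (le_of_eq ?_) (fin.trans (le_of_eq (by ring)))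
    simp only [wnorm, Qop, mul_sub]
  refine fin'.trans ?_
  have hAA : A ≤ (c * (2 * M)) ^ ((1 : ℝ) / 2) * A ^ ((1 : ℝ) / 2) := by
    calc A = A ^ ((1 : ℝ) / 2) * A ^ ((1 : ℝ) / 2) := by
          rw [← Real.sqrt_eq_rpow, Real.mul_self_sqrt hA0]
      _ ≤ _ := by gcongr
  calc 9 * K * A ≤ 9 * K * ((c * (2 * M)) ^ ((1 : ℝ) / 2) * A ^ ((1 : ℝ) / 2)) := by gcongr
    _ = _ := by ring
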